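/- Let $S = K[P_I, Q_J : I \in \binom{[n]}{d}, J \in \binom{[n]}{d+1}]$, let $\mathcal{I}_{d,d+1,n}$ be the ideal generated by the incidence relations $I_{A,B} = \sum_{i \in B \setminus A} (-1)^{|[i]\cap A| + |[i]\cap B|} P_{A \cup i} Q_{B \setminus i}$ for $|A| = d-1$, $|B| = d+2$, and let $\mathcal{R}_{d,n}$ be the ideal generated by the Plücker relations $R_{A,B} = \sum_{i \in B \setminus A} (-1)^{|[i]\cap A| + |[i]\cap B|} P_{A \cup i} P_{B \setminus i}$ for $|A| = d-1$, $|B| = d+1$. Then for every fixed $C \in \binom{[n]}{d+1}$, one has $\mathcal{R}_{d,n} \subseteq \mathcal{I}_{d,d+1,n} : \langle Q_C \rangle^\infty$. -/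

import Mathlib

open Finset MvPolynomial

noncomputable section

variable (K : Type*) [Field K] (d n : ℕ)

/-- The variable `P_I` of the ring `S = K[P_I, Q_J]`, for `I` of size `d`
(junk value `0` for index sets of the wrong size). -/
def PVar (I : Finset (Fin n)) : MvPolynomial (Finset (Fin n) ⊕ Finset (Fin n)) K :=
  if I.card = d then X (Sum.inl I) else 0

/-- The variable `Q_J` of the ring `S = K[P_I, Q_J]`, for `J` of size `d+1`
(junk value `0` for index sets of the wrong size). -/
def QVar (J : Finset (Fin n)) : MvPolynomial (Finset (Fin n) ⊕ Finset (Fin n)) K :=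
  if J.card = d + 1 then X (Sum.inr J) else 0

/-- The incidence relation `I_{A,B}` for `|A| = d-1`, `|B| = d+2`. -/
def incRel (A B : Finset (Fin n)) : MvPolynomial (Finset (Fin n) ⊕ Finset (Fin n)) K :=
  ∑ i ∈ B \ A,
    (-1 : MvPolynomial (Finset (Fin n) ⊕ Finset (Fin n)) K) ^
        ((A.filter (· ≤ i)).card + (B.filter (· ≤ i)).card) *
      PVar K d n (insert i A) * QVar K d n (B.erase i)

/-- The Plücker relation `R_{A,B}` for `|A| = d-1`, `|B| = d+1`. -/
def plRel (A B : Finset (Fin n)) : MvPolynomial (Finset (Fin n) ⊕ Finset (Fin n)) K :=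
  ∑ i ∈ B \ A,
    (-1 : MvPolynomial (Finset (Fin n) ⊕ Finset (Fin n)) K) ^
        ((A.filter (· ≤ i)).card + (B.filter (· ≤ i)).card) *
      PVar K d n (insert i A) * PVar K d n (B.erase i)

/-- The ideal generated by the incidence relations. -/
def incIdeal : Ideal (MvPolynomial (Finset (Fin n) ⊕ Finset (Fin n)) K) :=
  Ideal.span {f | ∃ A B : Finset (Fin n),
    A.card + 1 = d ∧ B.card = d + 2 ∧ f = incRel K d n A B}

/-- The ideal generated by the Plücker relations. -/
def plIdeal : Ideal (MvPolynomial (Finset (Fin n) ⊕ Finset (Fin n)) K) :=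
  Ideal.span {f | ∃ A B : Finset (Fin n),
    A.card + 1 = d ∧ B.card = d + 1 ∧ f = plRel K d n A B}

/-!
The `P_I` are the coordinates of an alternating form `p` of degree `d`. Once `Q_C` is inverted,
the incidence relations with `B = C ∪ {j}`, `j ∉ C`, express the contraction of `p` by the basis
vector `e_j` through the contractions by the `e_i` with `i ∈ C`. Hence `p` can be evaluated on a
free module of rank `d + 1`, where every form of degree `d` satisfies the Plücker relations.
-/

section PluckerRelations

variable {R M : Type*} [CommRing R] [AddCommGroup M] [Module R M] {e m : ℕ}

/-- The Plücker relation of a form `p` of degree `e + 1`, evaluated at `e` vectors `a` and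
`e + 2` vectors `b`. It vanishes identically when `p` is decomposable. -/
def pluckerSum (p : M [⋀^Fin (e + 1)]→ₗ[R] R) (a : Fin e → M) (b : Fin (e + 2) → M) : R :=
  ∑ k : Fin (e + 2), (-1) ^ (k : ℕ) * p (Matrix.vecCons (b k) a) * p (k.removeNth b)

lemma alternatingMap_sum_apply {N κ σ : Type*} [AddCommGroup N] [Module R N]
    (s : Finset σ) (f : σ → M [⋀^κ]→ₗ[R] N) (v : κ → M) :
    (∑ i ∈ s, f i) v = ∑ i ∈ s, f i v := by
  classical
  induction s using Finset.induction_on with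
  | empty => rfl
  | insert i s hi ih => rw [sum_insert hi, sum_insert hi, AlternatingMap.add_apply, ih]

lemma pluckerSum_eq_curryLeft_sum (p : M [⋀^Fin (e + 1)]→ₗ[R] R) (a : Fin e → M)
    (b : Fin (e + 2) → M) :
    pluckerSum p a b =
      p.curryLeft (∑ k : Fin (e + 2), ((-1) ^ (k : ℕ) * p (k.removeNth b)) • b k) a := by
  simp only [pluckerSum, map_sum, map_smul, alternatingMap_sum_apply, AlternatingMap.smul_apply,
    AlternatingMap.curryLeft_apply_apply, smul_eq_mul, mul_right_comm]

lemma exists_alternatingMap_eq_pluckerSum (p : M [⋀^Fin (e + 1)]→ₗ[R] R) (a : Fin e → M) :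
    ∃ f : M [⋀^Fin (e + 2)]→ₗ[R] R, ∀ b, f b = pluckerSum p a b := by
  let contraction : M →ₗ[R] R := p.toMultilinearMap.toLinearMap (Matrix.vecCons 0 a) 0
  have contraction_apply (x : M) : contraction x = p (Matrix.vecCons x a) := by
    simp [contraction, Matrix.vecCons]
  refine ⟨AlternatingMap.alternatizeUncurryFin (contraction.smulRight p), fun b ↦ ?_⟩
  simp only [AlternatingMap.alternatizeUncurryFin_apply, pluckerSum, LinearMap.smulRight_apply,
    AlternatingMap.smul_apply, contraction_apply]
  simp [mul_assoc]

lemma pluckerSum_tail_tail (p : M [⋀^Fin (e + 1)]→ₗ[R] R) (b : Fin (e + 2) → M) :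
    pluckerSum p (fun i ↦ b i.succ.succ) b = 0 := by
  have hrepeated (k : Fin e) :
      p (Matrix.vecCons (b k.succ.succ) fun i ↦ b i.succ.succ) = 0 :=
    p.map_eq_zero_of_eq _ (i := 0) (j := k.succ) (by simp) (Fin.succ_ne_zero k).symm
  have hzero : (0 : Fin (e + 2)).removeNth b = Matrix.vecCons (b 1) fun i ↦ b i.succ.succ := by
    ext i; cases i using Fin.cases <;> rfl
  have hone : (1 : Fin (e + 2)).removeNth b = Matrix.vecCons (b 0) fun i ↦ b i.succ.succ := by
    ext i; cases i using Fin.cases <;> rfl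
  rw [pluckerSum, Fin.sum_univ_succ, Fin.sum_univ_succ, Fin.succ_zero_eq_one, hzero, hone]
  simp [hrepeated, mul_comm (p (Matrix.vecCons (b 0) _))]

/-- Both sides of the relation are alternating, so it suffices to test it on basis vectors; then
`b` may be reordered so that it ends with `a`. -/
theorem pluckerSum_eq_zero_of_basis (c : Module.Basis (Fin (e + 2)) R M)
    (p : M [⋀^Fin (e + 1)]→ₗ[R] R) (a : Fin e → M) (b : Fin (e + 2) → M) :
    pluckerSum p a b = 0 := by
  rw [pluckerSum_eq_curryLeft_sum]
  suffices p.curryLeft (∑ k : Fin (e + 2), ((-1) ^ (k : ℕ) * p (k.removeNth b)) • b k) = 0 by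
    rw [this, AlternatingMap.zero_apply]
  refine c.ext_alternating fun u hu ↦ ?_
  rw [← pluckerSum_eq_curryLeft_sum, AlternatingMap.zero_apply]
  obtain ⟨f, hf⟩ := exists_alternatingMap_eq_pluckerSum p fun i ↦ c (u i)
  obtain ⟨σ, hσ⟩ : ∃ σ : Equiv.Perm (Fin (e + 2)), ∀ i : Fin e, σ i.succ.succ = u i := by
    have := Equiv.Perm.isMultiplyPretransitive (Fin (e + 2)) e
    obtain ⟨σ, hσ⟩ := MulAction.exists_smul_eq (Equiv.Perm (Fin (e + 2)))
      ((Fin.succEmb e).trans (Fin.succEmb (e + 1))) ⟨u, hu⟩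
    exact ⟨σ, fun i ↦ DFunLike.congr_fun hσ i⟩
  suffices f = 0 by rw [← hf, this, AlternatingMap.zero_apply]
  rw [← f.map_basis_eq_zero_iff (c.reindex σ.symm), hf]
  simpa only [Module.Basis.reindex_apply, Equiv.symm_symm, hσ]
    using pluckerSum_tail_tail p (c.reindex σ.symm)

lemma map_eq_of_curryLeft_eq {N : Type*} [AddCommGroup N] [Module R N]
    (p : M [⋀^Fin (m + 1)]→ₗ[R] N) {v w : Fin (m + 1) → M}
    (h : ∀ i, p.curryLeft (v i) = p.curryLeft (w i)) : p v = p w := by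
  have hupdate (u : Fin (m + 1) → M) (i : Fin (m + 1)) :
      p (Function.update u i (w i)) = p (Function.update u i (v i)) := by
    simp only [← Fin.insertNth_removeNth, AlternatingMap.map_insertNth,
      ← AlternatingMap.curryLeft_apply_apply, h]
  suffices ∀ s : Finset (Fin (m + 1)), p (s.piecewise w v) = p v by
    simpa using (this univ).symm
  intro s
  induction s using Finset.induction_on with
  | empty => simp
  | insert i s hi ih =>
    rw [piecewise_insert, hupdate, ← piecewise_eq_of_notMem s w v hi, Function.update_eq_self, ih]

theorem pluckerSum_eq_zero_of_curryLeft_mem_span {p : M [⋀^Fin (e + 1)]→ₗ[R] R}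
    (c : Fin (e + 2) → M)
    (hspan : ∀ x, p.curryLeft x ∈ Submodule.span R (Set.range fun j ↦ p.curryLeft (c j)))
    (a : Fin e → M) (b : Fin (e + 2) → M) : pluckerSum p a b = 0 := by
  have hcoord (x : M) :
      ∃ t : Fin (e + 2) → R, p.curryLeft (Fintype.linearCombination R c t) = p.curryLeft x := by
    obtain ⟨t, ht⟩ := (Submodule.mem_span_range_iff_exists_fun R).1 (hspan x)
    exact ⟨t, by simpa [Fintype.linearCombination_apply] using ht⟩
  choose t ht using hcoord
  let q := p.compLinearMap (Fintype.linearCombination R c)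
  have hpq (v : Fin (e + 1) → M) : p v = q (t ∘ v) :=
    map_eq_of_curryLeft_eq p fun i ↦ (ht (v i)).symm
  calc pluckerSum p a b = pluckerSum q (t ∘ a) (t ∘ b) := by
        simp only [pluckerSum, hpq, Matrix.vecCons, Fin.comp_cons]; rfl
    _ = 0 := pluckerSum_eq_zero_of_basis (Pi.basisFun R _) _ _ _

end PluckerRelations

section Enumeration

variable {ι : Type*} [LinearOrder ι] {m : ℕ}

lemma removeNth_orderEmbOfFin {A B : Finset ι} (hA : #A = m) (hB : #B = m + 1) (k : Fin (m + 1))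
    (hAB : B.erase (B.orderEmbOfFin hB k) = A) :
    k.removeNth (B.orderEmbOfFin hB) = A.orderEmbOfFin hA := by
  subst hAB
  refine orderEmbOfFin_unique hA (fun i ↦ mem_erase.2 ⟨fun h ↦ ?_, orderEmbOfFin_mem B hB _⟩)
    ((B.orderEmbOfFin hB).strictMono.removeNth k)
  exact Fin.succAbove_ne k i ((B.orderEmbOfFin hB).injective h)

lemma card_filter_le_orderEmbOfFin {A : Finset ι} (hA : #A = m) (k : Fin m) :
    #{x ∈ A | x ≤ A.orderEmbOfFin hA k} = k + 1 := by
  let v := A.orderEmbOfFin hA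
  calc #{x ∈ A | x ≤ v k} = #{x ∈ univ.map v.toEmbedding | x ≤ v k} := by
        rw [map_orderEmbOfFin_univ]
    _ = #(Iic k) := by simp [filter_map, filter_ge_eq_Iic]
    _ = k + 1 := Fin.card_Iic k

end Enumeration

section Coordinates

variable {R M ι : Type*} [CommRing R] [AddCommGroup M] [Module R M] [LinearOrder ι] {m : ℕ}

lemma ext_orderEmbOfFin {N : Type*} [AddCommGroup N] [Module R N] (b : Module.Basis ι R M)
    {f g : M [⋀^Fin m]→ₗ[R] N}
    (h : ∀ (A : Finset ι) (hA : #A = m),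
      f (b ∘ A.orderEmbOfFin hA) = g (b ∘ A.orderEmbOfFin hA)) : f = g := by
  refine exteriorPower.alternatingMapLinearEquiv.injective ((b.exteriorPower m).ext fun A ↦ ?_)
  simpa [exteriorPower.ιMulti_family, Set.powersetCard.ofFinEmbEquiv_symm_apply] using h A A.2

/-- The form of degree `m` whose coordinate on the increasing family of basis vectors indexed by
`A` is `P A`, for every `A` with `m` elements. -/
def coordForm (b : Module.Basis ι R M) (m : ℕ) (P : Finset ι → R) : M [⋀^Fin m]→ₗ[R] R :=
  exteriorPower.alternatingMapLinearEquiv.symm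
    ((b.exteriorPower m).constr R fun A ↦ P A)

lemma coordForm_orderEmbOfFin (b : Module.Basis ι R M) (P : Finset ι → R) {A : Finset ι}
    (hA : #A = m) : coordForm b m P (b ∘ A.orderEmbOfFin hA) = P A := by
  rw [coordForm, exteriorPower.alternatingMapLinearEquiv_symm_apply]
  have h := (b.exteriorPower m).constr_basis R (fun A ↦ P A) ⟨A, hA⟩
  rwa [exteriorPower.basis_apply] at h

lemma coordForm_vecCons_of_notMem (b : Module.Basis ι R M) (P : Finset ι → R) {A : Finset ι}
    (hA : #A = m) {i : ι} (hi : i ∉ A) :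
    coordForm b (m + 1) P (Matrix.vecCons (b i) (b ∘ A.orderEmbOfFin hA)) =
      (-1) ^ #{x ∈ A | x ≤ i} * P (insert i A) := by
  have hcard : #(insert i A) = m + 1 := by rw [card_insert_of_notMem hi, hA]
  let v := (insert i A).orderEmbOfFin hcard
  obtain ⟨k, hk⟩ : i ∈ Set.range v := by simp [v]
  have hremove : k.removeNth v = A.orderEmbOfFin hA :=
    removeNth_orderEmbOfFin hA hcard k (by rw [hk, erase_insert hi])
  have hcount : #{x ∈ A | x ≤ i} = k := by
    have h := card_filter_le_orderEmbOfFin hcard k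
    rwa [hk, filter_insert, if_pos le_rfl, card_insert_of_notMem (by simp [hi]),
      Nat.add_right_cancel_iff] at h
  have hinsert : k.insertNth (b i) (b ∘ A.orderEmbOfFin hA) = b ∘ v := by
    rw [← hremove, ← hk]
    exact Fin.insertNth_self_removeNth k (b ∘ v)
  rw [← AlternatingMap.neg_one_pow_smul_map_insertNth _ k, hinsert, coordForm_orderEmbOfFin, hcount]
  simp

end Coordinates

section ExchangeRelations

variable {R M ι : Type*} [CommRing R] [AddCommGroup M] [Module R M] [LinearOrder ι] {m : ℕ}

/-- The common shape of the Plücker relations (`Q = P`) and of the incidence relations between two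
families `P` and `Q` of scalars indexed by finite sets. -/
def exchangeSum (P Q : Finset ι → R) (A B : Finset ι) : R :=
  ∑ i ∈ B \ A, (-1) ^ (#{x ∈ A | x ≤ i} + #{x ∈ B | x ≤ i}) * P (insert i A) * Q (B.erase i)

lemma map_exchangeSum {S : Type*} [CommRing S] (φ : R →+* S) (P Q : Finset ι → R)
    (A B : Finset ι) : φ (exchangeSum P Q A B) = exchangeSum (φ ∘ P) (φ ∘ Q) A B := by
  simp [exchangeSum]

lemma exchangeSum_eq_sum_coordForm (b : Module.Basis ι R M) (P Q : Finset ι → R) {A : Finset ι}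
    (hA : #A = m) (B : Finset ι) :
    exchangeSum P Q A B = ∑ i ∈ B, (-1) ^ #{x ∈ B | x ≤ i} * Q (B.erase i) *
      coordForm b (m + 1) P (Matrix.vecCons (b i) (b ∘ A.orderEmbOfFin hA)) := by
  rw [← sum_subset (sdiff_subset : B \ A ⊆ B), exchangeSum]
  · refine sum_congr rfl fun i hi ↦ ?_
    rw [coordForm_vecCons_of_notMem b P hA (mem_sdiff.1 hi).2]
    ring
  · intro i hiB hi
    obtain ⟨k, rfl⟩ : i ∈ Set.range (A.orderEmbOfFin hA) := by simpa [hiB] using hi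
    rw [AlternatingMap.map_eq_zero_of_eq _ _ (i := 0) (j := k.succ) (by simp)
      (Fin.succ_ne_zero k).symm, mul_zero]

lemma exchangeSum_self_eq_neg_pluckerSum (b : Module.Basis ι R M) (P : Finset ι → R)
    {A B : Finset ι} (hA : #A = m) (hB : #B = m + 2) :
    exchangeSum P P A B = -pluckerSum (coordForm b (m + 1) P) (b ∘ A.orderEmbOfFin hA)
      (b ∘ B.orderEmbOfFin hB) := by
  let v := B.orderEmbOfFin hB
  have hremove (k : Fin (m + 2)) :
      coordForm b (m + 1) P (k.removeNth (b ∘ v)) = P (B.erase (v k)) := by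
    have hcard : #(B.erase (v k)) = m + 1 := by
      rw [card_erase_of_mem (orderEmbOfFin_mem B hB k), hB]; rfl
    rw [← coordForm_orderEmbOfFin b P hcard, ← removeNth_orderEmbOfFin hcard hB k rfl]
    rfl
  rw [exchangeSum_eq_sum_coordForm b P P hA, pluckerSum, ← sum_neg_distrib]
  calc _ = ∑ i ∈ univ.map v.toEmbedding, (-1) ^ #{x ∈ B | x ≤ i} * P (B.erase i) *
        coordForm b (m + 1) P (Matrix.vecCons (b i) (b ∘ A.orderEmbOfFin hA)) := by
        rw [map_orderEmbOfFin_univ]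
    _ = _ := by
        rw [sum_map]
        refine sum_congr rfl fun k _ ↦ ?_
        simp only [RelEmbedding.coe_toEmbedding, v, card_filter_le_orderEmbOfFin, hremove,
          pow_succ, Function.comp_apply]
        ring

lemma sum_smul_curryLeft_coordForm_eq_zero (b : Module.Basis ι R M) {P Q : Finset ι → R}
    {B : Finset ι} (hexchange : ∀ A : Finset ι, #A = m → exchangeSum P Q A B = 0) :
    ∑ i ∈ B, ((-1) ^ #{x ∈ B | x ≤ i} * Q (B.erase i)) • (coordForm b (m + 1) P).curryLeft (b i) =
      0 := by
  refine ext_orderEmbOfFin b fun A hA ↦ ?_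
  rw [alternatingMap_sum_apply, AlternatingMap.zero_apply, ← hexchange A hA,
    exchangeSum_eq_sum_coordForm b P Q hA]
  rfl

lemma curryLeft_coordForm_mem_span (b : Module.Basis ι R M) {P Q : Finset ι → R} {C : Finset ι}
    (hC : IsUnit (Q C))
    (hexchange : ∀ A B : Finset ι, #A = m → #B = #C + 1 → exchangeSum P Q A B = 0) (x : M) :
    (coordForm b (m + 1) P).curryLeft x ∈
      Submodule.span R ((fun i ↦ (coordForm b (m + 1) P).curryLeft (b i)) '' C) := by
  let contract := (coordForm b (m + 1) P).curryLeft
  let V := Submodule.span R ((fun i ↦ contract (b i)) '' C)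
  have hmem {i : ι} (hi : i ∈ C) : contract (b i) ∈ V := Submodule.subset_span ⟨i, hi, rfl⟩
  have hbasis (j : ι) : contract (b j) ∈ V := by
    by_cases hj : j ∈ C
    · exact hmem hj
    have hrel := sum_smul_curryLeft_coordForm_eq_zero b (B := insert j C)
      fun A hA ↦ hexchange A _ hA (card_insert_of_notMem hj)
    rw [sum_insert hj, erase_insert hj] at hrel
    have hunit := (isUnit_one.neg.pow #{x ∈ insert j C | x ≤ j}).mul hC
    rw [← Submodule.smul_mem_iff_of_isUnit V hunit, eq_neg_of_add_eq_zero_left hrel]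
    exact V.neg_mem (V.sum_mem fun i hi ↦ V.smul_mem _ (hmem hi))
  have hspan : Submodule.map contract (Submodule.span R (Set.range b)) ≤ V :=
    (Submodule.map_span_le _ _ _).2 (Set.forall_mem_range.2 hbasis)
  exact hspan (Submodule.mem_map_of_mem (b.mem_span x))

theorem exchangeSum_self_eq_zero {P Q : Finset ι → R} {C : Finset ι} {r : ℕ} (hC : #C = r + 1)
    (hQC : IsUnit (Q C))
    (hincidence : ∀ A B : Finset ι, #A + 1 = r → #B = r + 2 → exchangeSum P Q A B = 0)
    {A B : Finset ι} (hA : #A + 1 = r) (hB : #B = r + 1) : exchangeSum P P A B = 0 := by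
  subst hA
  let b : Module.Basis ι R (ι →₀ R) := Finsupp.basisSingleOne
  rw [exchangeSum_self_eq_neg_pluckerSum b P rfl hB, neg_eq_zero]
  refine pluckerSum_eq_zero_of_curryLeft_mem_span (b ∘ C.orderEmbOfFin hC) (fun x ↦ ?_) _ _
  have h := curryLeft_coordForm_mem_span b hQC
    (fun A' B' hA' hB' ↦ hincidence A' B' (by rw [hA']) (by rw [hB', hC])) x
  rwa [← range_orderEmbOfFin C hC, ← Set.range_comp] at h

end ExchangeRelations

lemma algebraMap_away_mk_eq_zero_iff {R : Type*} [CommRing R] (I : Ideal R) (y g : R) :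
    algebraMap (R ⧸ I) (Localization.Away (Ideal.Quotient.mk I y)) (Ideal.Quotient.mk I g) = 0 ↔
      ∃ k : ℕ, y ^ k * g ∈ I := by
  simp only [IsLocalization.map_eq_zero_iff (Submonoid.powers (Ideal.Quotient.mk I y)),
    Subtype.exists, Submonoid.mem_powers_iff, exists_prop, exists_exists_eq_and, ← map_pow,
    ← map_mul, Ideal.Quotient.eq_zero_iff_mem]

/-- the Plücker ideal is contained in the saturation of the incidence
ideal with respect to `Q_C`, for any fixed `C` of size `d+1`. -/
theorem plucker_ideal_subset_saturation_of_incidence_ideal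
    (C : Finset (Fin n)) (hC : C.card = d + 1) :
    ∀ g ∈ plIdeal K d n, ∃ k : ℕ, QVar K d n C ^ k * g ∈ incIdeal K d n := by
  let I := incIdeal K d n
  let y := Ideal.Quotient.mk I (QVar K d n C)
  let φ := (algebraMap _ (Localization.Away y)).comp (Ideal.Quotient.mk I)
  have hincidence (A B : Finset (Fin n)) (hA : #A + 1 = d) (hB : #B = d + 2) :
      exchangeSum (φ ∘ PVar K d n) (φ ∘ QVar K d n) A B = 0 := by
    have hrel : incRel K d n A B ∈ I := Ideal.subset_span ⟨A, B, hA, hB, rfl⟩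
    calc _ = φ (incRel K d n A B) := (map_exchangeSum φ _ _ A B).symm
      _ = 0 := by
        rw [RingHom.comp_apply, Ideal.Quotient.eq_zero_iff_mem.2 hrel, map_zero]
  have hplucker : plIdeal K d n ≤ RingHom.ker φ := by
    rw [plIdeal, Ideal.span_le]
    rintro _ ⟨A, B, hA, hB, rfl⟩
    exact (map_exchangeSum φ _ _ A B).trans
      (exchangeSum_self_eq_zero hC (IsLocalization.Away.algebraMap_isUnit y) hincidence hA hB)
  exact fun g hg ↦ (algebraMap_away_mk_eq_zero_iff I _ g).1 (hplucker hg)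

end
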